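/- Let a > 0, b > 0, c > 0 be real numbers satisfying c > b − a + 1/2, b ≥ a − 1/2, c > 3a + 1/2 − b, b > a, and c ≥ a + a/(2(b−a)). Put ν = (b + c − a − 3/2)/2 and for each positive integer n define C(n,ν) = Σ_{k=0}^{n} (−1)^k C(n,k) (n+2ν)_k (ν+1)_k (a)_k / ((ν+1/2)_k (b)_k (c)_k). Then C(1,ν) ≥ 0 and C(n,ν) > 0 for every integer n ≥ 2. -/

import Mathlib

/-- Pochhammer symbol `(a)_k = a (a+1) ⋯ (a+k-1)` for a real number `a`. -/
noncomputable def poch (a : ℝ) (k : ℕ) : ℝ := ∏ i ∈ Finset.range k, (a + i)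

/-- The terminating series `C(n,ν) = ₄F₃[−n, n+2ν, ν+1, a; ν+1/2, b, c]` from
Gasper's sums-of-squares expansion. -/
noncomputable def gasperC (a b c ν : ℝ) (n : ℕ) : ℝ :=
  ∑ k ∈ Finset.range (n + 1),
    (-1 : ℝ) ^ k * (n.choose k) * poch ((n : ℝ) + 2 * ν) k * poch (ν + 1) k * poch a k /
      (poch (ν + 1 / 2) k * poch b k * poch c k)

lemma poch_zero (a : ℝ) : poch a 0 = 1 := by simp [poch]

lemma poch_succ (a : ℝ) (k : ℕ) : poch a (k + 1) = poch a k * (a + k) := by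
  simp [poch, Finset.prod_range_succ]

lemma poch_succ' (a : ℝ) (k : ℕ) : poch a (k + 1) = a * poch (a + 1) k := by
  unfold poch
  rw [Finset.prod_range_succ']
  rw [mul_comm]
  congr 1
  · simp
  · apply Finset.prod_congr rfl
    intro i _
    push_cast
    ring

lemma poch_add (a : ℝ) (j i : ℕ) : poch a (j + i) = poch a j * poch (a + j) i := by
  induction i with
  | zero => simp [poch_zero]
  | succ i ih =>
    rw [← add_assoc, poch_succ, ih, poch_succ]
    push_cast
    ring

lemma poch_pos {a : ℝ} (ha : 0 < a) (k : ℕ) : 0 < poch a k := by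
  unfold poch
  apply Finset.prod_pos
  intro i _
  positivity

/-- reflection -/
lemma poch_reflect (a : ℝ) (k : ℕ) : poch (1 - a - k) k = (-1) ^ k * poch a k := by
  induction k generalizing a with
  | zero => simp [poch_zero]
  | succ k ih =>
    rw [poch_succ', poch_succ]
    have h : (1 - a - ((k + 1 : ℕ) : ℝ) + 1) = 1 - a - k := by push_cast; ring
    rw [h, ih]
    push_cast
    ring

/-- Pfaff--Saalschuetz in polynomial form. -/
lemma saal (k : ℕ) : ∀ (x y s : ℝ), poch (y + s) k * poch (x + s) k =
    ∑ j ∈ Finset.range (k + 1), (k.choose j : ℝ) * poch x j * poch y j *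
      poch (x + y + s + j) (k - j) * poch s (k - j) := by
  induction k with
  | zero => intro x y s; simp [poch_zero]
  | succ k ih =>
    intro x y s
    have h := ih x y (s + 1)
    rw [poch_succ', poch_succ']
    have e1 : y + s + 1 = y + (s + 1) := by ring
    have e2 : x + s + 1 = x + (s + 1) := by ring
    have e3 : (y + s) * poch (y + s + 1) k * ((x + s) * poch (x + s + 1) k)
        = (x + s) * (y + s) * (poch (y + (s + 1)) k * poch (x + (s + 1)) k) := by
      rw [e1, e2]; ring
    rw [e3, h]
    have e4 : ∑ j ∈ Finset.range (k + 1), (k.choose j : ℝ) * poch x j * poch y j *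
          poch (x + y + (s + 1) + j) (k - j) * poch (s + 1) (k - j)
        = ∑ j ∈ Finset.range (k + 1 + 1), (k.choose j : ℝ) * poch x j * poch y j *
          poch (x + y + (s + 1) + j) (k - j) * poch (s + 1) (k - j) := by
      rw [Finset.sum_range_succ _ (k + 1)]
      simp [Nat.choose_succ_self]
    rw [e4, Finset.mul_sum, ← sub_eq_zero, ← Finset.sum_sub_distrib]
    set G : ℕ → ℝ := fun j => match j with
      | 0 => 0
      | j + 1 => (k.choose j : ℝ) * poch x (j + 1) * poch y (j + 1) *
          poch (x + y + s + j + 1) (k - j) * poch (s + 1) (k - j) with hG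
    have key : ∀ j ∈ Finset.range (k + 1 + 1),
        (x + s) * (y + s) * ((k.choose j : ℝ) * poch x j * poch y j *
          poch (x + y + (s + 1) + j) (k - j) * poch (s + 1) (k - j)) -
        ((k + 1).choose j : ℝ) * poch x j * poch y j *
          poch (x + y + s + j) (k + 1 - j) * poch s (k + 1 - j) = G (j + 1) - G j := by
      intro j hj
      rw [Finset.mem_range] at hj
      rcases j with _ | j
      · simp only [hG, Nat.sub_zero, poch_succ', poch_zero, Nat.choose_zero_right]
        have e : x + y + (s + 1) = x + y + s + 1 := by ring
        simp only [Nat.cast_zero, add_zero, e]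
        push_cast
        ring
      · obtain ⟨d, hd⟩ : ∃ d, k = j + d := ⟨k - j, by omega⟩
        subst hd
        have s1 : j + d + 1 - (j + 1) = d := by omega
        have s2 : j + d - j = d := by omega
        simp only [hG, s1, s2]
        rcases d with _ | d
        · have s3 : (j + 0).choose (j + 1) = 0 := by simp
          have s4 : (j + 0 + 1).choose (j + 1) = 1 := by simp
          have s5 : (j + 0).choose j = 1 := by simp
          rw [s3, s4, s5]
          simp [poch_zero]
        · have s6 : j + (d + 1) - (j + 1) = d := by omega
          rw [s6, Nat.choose_succ_succ]
          have hc : ((j + (d + 1)).choose (j + 1) : ℝ) * (j + 1) =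
              ((j + (d + 1)).choose j : ℝ) * (d + 1) := by
            have := Nat.choose_succ_right_eq (j + (d + 1)) j
            have h2 : j + (d + 1) - j = d + 1 := by omega
            rw [h2] at this
            exact_mod_cast this
          have e : x + y + (s + 1) + ((j + 1 : ℕ) : ℝ) = x + y + s + ((j : ℝ) + 1) + 1 := by
            push_cast; ring
          have e' : x + y + s + ((j + 1 : ℕ) : ℝ) + 1 = x + y + s + ((j : ℝ) + 1) + 1 := by
            push_cast; ring
          have e'' : x + y + s + ((j + 1 : ℕ) : ℝ) = x + y + s + ((j : ℝ) + 1) := by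
            push_cast; ring
          have e3 : x + y + s + (j : ℝ) + 1 = x + y + s + ((j : ℝ) + 1) := by ring
          rw [e, e', e'', e3]
          rw [poch_succ' (x + y + s + ((j : ℝ) + 1)) d, poch_succ' s d,
            poch_succ (s + 1) d, poch_succ x (j + 1), poch_succ y (j + 1)]
          push_cast
          generalize ((j + (d + 1)).choose (j + 1) : ℝ) = c1 at *
          generalize ((j + (d + 1)).choose j : ℝ) = c0 at *
          generalize poch x (j + 1) = X
          generalize poch y (j + 1) = Y
          generalize poch (x + y + s + ((j : ℝ) + 1) + 1) d = W
          generalize poch (s + 1) d = S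
          linear_combination (-(X * Y * W * S * (x + y + s + j + 1))) * hc
    rw [Finset.sum_congr rfl key, Finset.sum_range_sub]
    simp [hG, Nat.choose_succ_self]

lemma saal2 (N : ℕ) (A E F s : ℝ) (hs : s = E + F - A + N - 1) :
    ∑ i ∈ Finset.range (N + 1), (-1 : ℝ) ^ i * (N.choose i : ℝ) * poch A i * poch s i *
      poch (E + i) (N - i) * poch (F + i) (N - i) = poch (E - A) N * poch (F - A) N := by
  have h := saal N A s (1 - F - N)
  have e1 : s + (1 - F - N) = E - A := by rw [hs]; ring
  have e2 : A + (1 - F - N) = 1 - (F - A) - N := by ring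
  rw [e1, e2, poch_reflect] at h
  have hsq : ((-1 : ℝ) ^ N) * (-1) ^ N = 1 := by rw [← mul_pow]; simp
  have h' : poch (E - A) N * poch (F - A) N = (-1) ^ N * (poch (E - A) N *
      ((-1) ^ N * poch (F - A) N)) := by
    linear_combination (-(poch (E - A) N * poch (F - A) N)) * hsq
  rw [h', h, Finset.mul_sum]
  apply Finset.sum_congr rfl
  intro i hi
  rw [Finset.mem_range] at hi
  obtain ⟨d, rfl⟩ : ∃ d, N = i + d := ⟨N - i, by omega⟩
  have s1 : i + d - i = d := by omega
  rw [s1]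
  have r := poch_reflect (F + i) d
  have e3 : 1 - (F + i) - d = 1 - F - ((i + d : ℕ) : ℝ) := by push_cast; ring
  have e4 : A + s + (1 - F - ((i + d : ℕ) : ℝ)) + i = E + i := by rw [hs]; ring
  rw [e3] at r
  rw [r, e4, pow_add]
  have hsq : ((-1 : ℝ) ^ d) * (-1) ^ d = 1 := by rw [← mul_pow]; simp
  linear_combination (-((-1 : ℝ) ^ i * ((i + d).choose i : ℝ) * poch A i * poch s i *
      poch (E + i) d * poch (F + i) d)) * hsq

lemma whip (n : ℕ) (A B C D E F : ℝ) (hD : 0 < D) (hE : 0 < E) (hF : 0 < F)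
    (hbal : A + B + C + 1 - n = D + E + F) :
    poch E n * poch F n * ∑ k ∈ Finset.range (n + 1),
      (-1 : ℝ) ^ k * (n.choose k) * poch C k * poch B k * poch A k /
        (poch F k * poch E k * poch D k) =
    ∑ j ∈ Finset.range (n + 1), (-1 : ℝ) ^ j * (n.choose j) * poch A j * poch (D - B) j *
      poch (D - C) j / poch D j * (poch (E - A) (n - j) * poch (F - A) (n - j)) := by
  set s := B + C - D with hs
  have step : ∀ k ∈ Finset.range (n + 1), poch E n * poch F n *
      ((-1 : ℝ) ^ k * (n.choose k) * poch C k * poch B k * poch A k /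
        (poch F k * poch E k * poch D k)) =
      ∑ j ∈ Finset.range (k + 1), (-1 : ℝ) ^ k * (n.choose k) * poch A k *
        poch (E + k) (n - k) * poch (F + k) (n - k) * (k.choose j) *
        (poch (D - B) j * poch (D - C) j / poch D j) * poch s (k - j) := by
    intro k hk
    rw [Finset.mem_range] at hk
    have h := saal k (D - B) (D - C) s
    have e1 : D - C + s = B := by rw [hs]; ring
    have e2 : D - B + s = C := by rw [hs]; ring
    rw [e1, e2] at h
    obtain ⟨d, rfl⟩ : ∃ d, n = k + d := ⟨n - k, by omega⟩
    have s1 : k + d - k = d := by omega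
    rw [s1, poch_add E, poch_add F]
    have hEk := (poch_pos hE k).ne'
    have hFk := (poch_pos hF k).ne'
    have hDk := (poch_pos hD k).ne'
    have : poch E k * poch (E + k) d * (poch F k * poch (F + k) d) *
      ((-1 : ℝ) ^ k * ((k + d).choose k) * poch C k * poch B k * poch A k /
        (poch F k * poch E k * poch D k)) = (-1 : ℝ) ^ k * ((k + d).choose k) * poch A k *
        poch (E + k) d * poch (F + k) d / poch D k * (poch B k * poch C k) := by
      field_simp
    rw [this, h, Finset.mul_sum]
    apply Finset.sum_congr rfl
    intro j hj
    rw [Finset.mem_range] at hj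
    obtain ⟨i, rfl⟩ : ∃ i, k = j + i := ⟨k - j, by omega⟩
    have s2 : j + i - j = i := by omega
    have e4 : D - B + (D - C) + s + j = D + j := by rw [hs]; ring
    have hDj := (poch_pos hD j).ne'
    have hDi := (poch_pos (a := D + j) (by positivity) i).ne'
    rw [s2, e4, poch_add D]
    generalize poch D j = Dj at *
    generalize poch (D + j) i = Di at *
    generalize (-1 : ℝ) ^ (j + i) * ((j + i + d).choose (j + i)) * poch A (j + i) *
        poch (E + ((j + i : ℕ) : ℝ)) d * poch (F + ((j + i : ℕ) : ℝ)) d = Z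
    generalize poch (D - B) j = X
    generalize poch (D - C) j = Y
    generalize poch s i = S
    generalize ((j + i).choose j : ℝ) = ch
    have : Z / (Dj * Di) * (ch * X * Y * Di * S) = Z * ch * (X * Y / Dj) * S := by
      field_simp
    rw [this]
  rw [Finset.mul_sum, Finset.sum_congr rfl step]
  rw [Finset.sum_comm' (t' := Finset.range (n + 1)) (s' := fun j => Finset.Ico j (n + 1))
    (by intro k j; simp only [Finset.mem_range, Finset.mem_Ico]; omega)]
  apply Finset.sum_congr rfl
  intro j hj
  rw [Finset.mem_range] at hj
  obtain ⟨N, rfl⟩ : ∃ N, n = j + N := ⟨n - j, by omega⟩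
  have s1 : j + N - j = N := by omega
  have s2 : j + N + 1 - j = N + 1 := by omega
  rw [Finset.sum_Ico_eq_sum_range, s1, s2]
  have h := saal2 N (A + j) (E + j) (F + j) s (by rw [hs]; push_cast at hbal; linarith)
  have e1 : E + j - (A + j) = E - A := by ring
  have e2 : F + j - (A + j) = F - A := by ring
  rw [e1, e2] at h
  rw [← h, Finset.mul_sum]
  apply Finset.sum_congr rfl
  intro i hi
  rw [Finset.mem_range] at hi
  obtain ⟨d, rfl⟩ : ∃ d, N = i + d := ⟨N - i, by omega⟩
  have s3 : j + (i + d) - (j + i) = d := by omega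
  have s4 : i + d - i = d := by omega
  have s5 : j + i - j = i := by omega
  rw [s3, s4, s5, poch_add A]
  have hch : (((j + (i + d)).choose (j + i) : ℕ) : ℝ) * ((j + i).choose j : ℕ) =
      ((j + (i + d)).choose j : ℕ) * ((i + d).choose i : ℕ) := by
    have := Nat.choose_mul (n := j + (i + d)) (k := j + i) (s := j) (by omega)
    have t1 : j + (i + d) - j = i + d := by omega
    rw [t1, s5] at this
    exact_mod_cast this
  have e5 : E + ((j + i : ℕ) : ℝ) = E + j + i := by push_cast; ring
  have e6 : F + ((j + i : ℕ) : ℝ) = F + j + i := by push_cast; ring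
  rw [e5, e6, pow_add]
  linear_combination ((-1 : ℝ) ^ j * (-1) ^ i * (poch A j * poch (A + j) i) *
        poch (E + j + i) d * poch (F + j + i) d *
        (poch (D - B) j * poch (D - C) j / poch D j) * poch s i) * hch

lemma core_ineqs (a δ β ε c : ℝ) (hβ0 : 0 < β) (hε0 : 0 < ε) (ha : 0 < a) (hd : 0 < δ)
    (hβ : β < 1 / 2) (hε : ε < 1 / 2)
    (hδ : δ = ε + a - β) (hcc : c = a + δ + ε + 1 / 2) (hA : a * δ < c) : c ≤ 6 := by
  by_contra hc
  push Not at hc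
  have h1 : 4 * ((a - 1) * (δ - 1)) = (a + δ - 2) ^ 2 - (β - ε) ^ 2 := by rw [hδ]; ring
  have h2 : (a - 1) * (δ - 1) < ε + 3 / 2 := by nlinarith
  have h3 : (β - ε) ^ 2 ≤ 1 / 4 := by nlinarith
  have h4 : 7 / 2 - ε ≤ a + δ - 2 := by linarith
  nlinarith

lemma hpoly (a δ β ε c m : ℝ) (hcc : c = a + δ + ε + 1 / 2) :
    (c + m) * (m + β) * (m + ε) - (a + m) * (δ + m) * (m + β - 1 / 2) =
    (2 * ε + 1) * m ^ 2 + m * (c * (1 / 2 + ε) - a * δ + β * ε - (ε + 1 / 2) * (1 / 2 - β))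
      + c * β * ε + a * δ * (1 / 2 - β) := by
  rw [hcc]; ring

lemma h_big (A β ε c m : ℝ) (hβ0 : 0 < β) (hε0 : 0 < ε) (hc : 0 < c)
    (hβ : β < 1 / 2) (hA : A < c) (hm : 1 ≤ m) (hε : 1 / 2 ≤ ε) :
    0 ≤ (2 * ε + 1) * m ^ 2 + m * (c * (1 / 2 + ε) - A + β * ε - (ε + 1 / 2) * (1 / 2 - β))
      + c * β * ε + A * (1 / 2 - β) := by
  have h0 : 0 ≤ (c - A) * (m - (1 / 2 - β)) := mul_nonneg (by linarith) (by linarith)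
  have h1 : 0 ≤ m * c * (ε - 1 / 2) := by
    apply mul_nonneg (by positivity) (by linarith)
  have h2 : 0 ≤ (ε + 1 / 2) * m * (m - (1 / 2 - β)) := by
    apply mul_nonneg (by positivity) (by linarith)
  have h3 : 0 ≤ c * (1 / 2 - β) := mul_nonneg hc.le (by linarith)
  have h4 : 0 ≤ m * (β * ε) := by positivity
  have h5 : 0 ≤ c * β * ε := by positivity
  have h6 : 0 ≤ (ε + 1 / 2) * m ^ 2 := by positivity
  nlinarith

lemma h_three (A β ε c m : ℝ) (hβ0 : 0 < β) (hε0 : 0 < ε) (hc : 0 < c) (hc6 : c ≤ 6)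
    (hβ : β < 1 / 2) (hA : A < c) (hm : 3 ≤ m) (hε : ε < 1 / 2) :
    0 ≤ (2 * ε + 1) * m ^ 2 + m * (c * (1 / 2 + ε) - A + β * ε - (ε + 1 / 2) * (1 / 2 - β))
      + c * β * ε + A * (1 / 2 - β) := by
  have h0 : 0 ≤ (c - A) * (m - (1 / 2 - β)) := mul_nonneg (by linarith) (by linarith)
  have h1 : 0 ≤ m * c * ε := by positivity
  have h4 : 0 ≤ m * (β * ε) := by positivity
  have h5 : 0 ≤ c * β * ε := by positivity
  have h6 : 0 ≤ ε * m * (2 * m - (1 / 2 - β)) := mul_nonneg (by positivity) (by linarith)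
  have h7 : 0 ≤ m * (m - 3) := mul_nonneg (by linarith) (by linarith)
  have h8 : 0 ≤ (6 - c) * (m - 3) := mul_nonneg (by linarith) (by linarith)
  -- remaining: m ^ 2 - m * c / 2 - m / 2 * (1 / 2 - β) + c * (1 / 2 - β) ≥ 0
  have h9 : 0 ≤ m ^ 2 - m * c / 2 - m / 2 * (1 / 2 - β) + c * (1 / 2 - β) := by
    set t := 1 / 2 - β with ht
    have ht0 : 0 < t := by linarith
    have ht1 : t < 1 / 2 := by linarith
    nlinarith [mul_nonneg ht0.le (sub_nonneg.2 hm), mul_nonneg ht0.le (sub_nonneg.2 hc6),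
      mul_nonneg (sub_nonneg.2 ht1.le) (sub_nonneg.2 hc6), mul_nonneg (sub_nonneg.2 ht1.le) (sub_nonneg.2 hm),
      mul_nonneg (sub_nonneg.2 ht1.le) h8, mul_nonneg ht0.le h8]
  nlinarith

lemma h_one (A β ε c : ℝ) (hβ0 : 0 < β) (hε0 : 0 < ε) (hc : 0 < c) (hc6 : c ≤ 6)
    (hβ : β < 1 / 2) (hA : A < c) (hε : ε < 1 / 2) :
    -(1 / 5) * ((c + 1) * (1 + β) * (1 + ε)) ≤
    (2 * ε + 1) * 1 ^ 2 + 1 * (c * (1 / 2 + ε) - A + β * ε - (ε + 1 / 2) * (1 / 2 - β))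
      + c * β * ε + A * (1 / 2 - β) := by
  have h0 : 0 ≤ (c - A) * (1 - (1 / 2 - β)) := mul_nonneg (by linarith) (by linarith)
  have h1 : 0 ≤ c * ε := by positivity
  have h5 : 0 ≤ c * β * ε := by positivity
  have h6 : 0 ≤ β * ε := by positivity
  nlinarith [mul_nonneg hβ0.le (sub_nonneg.2 hc6), mul_nonneg (sub_nonneg.2 hβ.le) (sub_nonneg.2 hc6), mul_nonneg (sub_nonneg.2 hβ.le) hc.le, mul_nonneg hβ0.le hc.le]

lemma h_two (A β ε c : ℝ) (hβ0 : 0 < β) (hε0 : 0 < ε) (hc : 0 < c) (hc6 : c ≤ 6)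
    (hβ : β < 1 / 2) (hA : A < c) (hε : ε < 1 / 2) :
    -(1 / 10) * ((c + 2) * (2 + β) * (2 + ε)) ≤
    (2 * ε + 1) * 2 ^ 2 + 2 * (c * (1 / 2 + ε) - A + β * ε - (ε + 1 / 2) * (1 / 2 - β))
      + c * β * ε + A * (1 / 2 - β) := by
  have h0 : 0 ≤ (c - A) * (2 - (1 / 2 - β)) := mul_nonneg (by linarith) (by linarith)
  have h1 : 0 ≤ c * ε := by positivity
  have h5 : 0 ≤ c * β * ε := by positivity
  have h6 : 0 ≤ β * ε := by positivity
  nlinarith [mul_nonneg hβ0.le (sub_nonneg.2 hc6), mul_nonneg (sub_nonneg.2 hβ.le) (sub_nonneg.2 hc6), mul_nonneg (sub_nonneg.2 hβ.le) hc.le, mul_nonneg hβ0.le hc.le]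

lemma h_one' (A β ε c : ℝ) (hβ0 : 0 < β) (hε0 : 0 < ε) (hc : 0 < c) (hc6 : c ≤ 6)
    (hβ : β < 1 / 2) (hA : A < 2 / 3 * c) (hε : ε < 1 / 2) :
    0 ≤
    (2 * ε + 1) * 1 ^ 2 + 1 * (c * (1 / 2 + ε) - A + β * ε - (ε + 1 / 2) * (1 / 2 - β))
      + c * β * ε + A * (1 / 2 - β) := by
  have h0 : 0 ≤ (2 / 3 * c - A) * (1 - (1 / 2 - β)) := mul_nonneg (by linarith) (by linarith)
  have h1 : 0 ≤ c * ε := by positivity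
  have h5 : 0 ≤ c * β * ε := by positivity
  have h6 : 0 ≤ β * ε := by positivity
  nlinarith [mul_nonneg hβ0.le (sub_nonneg.2 hc6), mul_nonneg (sub_nonneg.2 hβ.le) (sub_nonneg.2 hc6), mul_nonneg (sub_nonneg.2 hβ.le) hc.le, mul_nonneg hβ0.le hc.le]

lemma h_two' (A β ε c : ℝ) (hβ0 : 0 < β) (hε0 : 0 < ε) (hc : 0 < c) (hc6 : c ≤ 6)
    (hβ : β < 1 / 2) (hA : A < 2 / 3 * c) (hε : ε < 1 / 2) :
    0 ≤
    (2 * ε + 1) * 2 ^ 2 + 2 * (c * (1 / 2 + ε) - A + β * ε - (ε + 1 / 2) * (1 / 2 - β))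
      + c * β * ε + A * (1 / 2 - β) := by
  have h0 : 0 ≤ (2 / 3 * c - A) * (2 - (1 / 2 - β)) := mul_nonneg (by linarith) (by linarith)
  have h1 : 0 ≤ c * ε := by positivity
  have h5 : 0 ≤ c * β * ε := by positivity
  have h6 : 0 ≤ β * ε := by positivity
  nlinarith [mul_nonneg hβ0.le (sub_nonneg.2 hc6), mul_nonneg (sub_nonneg.2 hβ.le) (sub_nonneg.2 hc6), mul_nonneg (sub_nonneg.2 hβ.le) hc.le, mul_nonneg hβ0.le hc.le]

/-- absolute value of the last term, at `n = m + 1` -/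
noncomputable def lastT (a δ β c : ℝ) (m : ℕ) : ℝ :=
  poch a (m + 1) * poch δ (m + 1) / poch c (m + 1) * ((1 / 2 - β) * poch (β + 1 / 2) m)

lemma lastT_step (a δ β ε c K K' : ℝ) (m : ℕ) (ha : 0 < a) (hd : 0 < δ) (hβ0 : 0 < β)
    (hε0 : 0 < ε) (hc : 0 < c) (hK : 0 < K)
    (h : lastT a δ β c m ≤ K * (poch β (m + 1) * poch ε (m + 1)))
    (hs : K * ((a + (m + 1)) * (δ + (m + 1)) * ((m + 1) + β - 1 / 2)) ≤
      K' * ((c + (m + 1)) * ((m + 1) + β) * ((m + 1) + ε))) :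
    lastT a δ β c (m + 1) ≤ K' * (poch β (m + 1 + 1) * poch ε (m + 1 + 1)) := by
  have hcm : 0 < c + (m + 1) := by positivity
  have e : lastT a δ β c (m + 1) = lastT a δ β c m *
      ((a + (m + 1)) * (δ + (m + 1)) * ((m + 1) + β - 1 / 2) / (c + (m + 1))) := by
    unfold lastT
    have := (poch_pos hc (m + 1)).ne'
    rw [poch_succ a (m + 1), poch_succ δ (m + 1), poch_succ c (m + 1), poch_succ (β + 1 / 2) m]
    push_cast
    generalize poch c (m + 1) = C at *
    have : c + (m + 1) ≠ 0 := hcm.ne'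
    rw [mul_div_mul_comm] 
    generalize poch a (m + 1) = X at *
    generalize poch δ (m + 1) = Y at *
    field_simp
    ring
  have hP : 0 < poch β (m + 1) * poch ε (m + 1) :=
    mul_pos (poch_pos hβ0 _) (poch_pos hε0 _)
  rw [e, poch_succ β (m + 1), poch_succ ε (m + 1)]
  push_cast
  have hg : 0 ≤ (a + (m + 1)) * (δ + (m + 1)) * ((m + 1) + β - 1 / 2) / (c + (m + 1)) := by
    apply div_nonneg _ hcm.le
    apply mul_nonneg (by positivity)
    have : (0 : ℝ) ≤ m := by positivity
    linarith
  refine (mul_le_mul_of_nonneg_right h hg).trans ?_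
  have h2 : K * ((a + (m + 1)) * (δ + (m + 1)) * ((m + 1) + β - 1 / 2) / (c + (m + 1))) ≤
      K' * (((m + 1) + β) * ((m + 1) + ε)) := by
    rw [← mul_div_assoc, div_le_iff₀ hcm]
    linarith
  have h3 := mul_le_mul_of_nonneg_left h2 hP.le
  linarith

lemma lastT_bound (a δ β ε c : ℝ) (ha : 0 < a) (hd : 0 < δ) (hβ0 : 0 < β)
    (hε0 : 0 < ε) (hc : 0 < c) (hβ : β < 1 / 2)
    (hδ : δ = ε + a - β) (hcc : c = a + δ + ε + 1 / 2) (hA : a * δ < c)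
    (hT : a * δ * (1 / 2 - β) ≤ c * β * ε) (m : ℕ) :
    lastT a δ β c m ≤ poch β (m + 1) * poch ε (m + 1) ∨
    (ε < 1 / 2 ∧ 2 / 3 * c ≤ a * δ ∧
      lastT a δ β c m ≤ 33 / 25 * (poch β (m + 1) * poch ε (m + 1))) := by
  have h0 : lastT a δ β c 0 ≤ 1 * (poch β (0 + 1) * poch ε (0 + 1)) := by
    unfold lastT
    simp only [poch_succ, poch_zero]
    norm_num
    rw [div_mul_eq_mul_div, div_le_iff₀ hc]
    linarith
  have mono : ∀ K : ℝ, 0 < K → ∀ j : ℕ,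
      0 ≤ (c + ((j : ℝ) + 1)) * (((j : ℝ) + 1) + β) * (((j : ℝ) + 1) + ε)
        - (a + ((j : ℝ) + 1)) * (δ + ((j : ℝ) + 1)) * (((j : ℝ) + 1) + β - 1 / 2) →
      lastT a δ β c j ≤ K * (poch β (j + 1) * poch ε (j + 1)) →
      lastT a δ β c (j + 1) ≤ K * (poch β (j + 1 + 1) * poch ε (j + 1 + 1)) := by
    intro K hK j hj h
    apply lastT_step a δ β ε c K K j ha hd hβ0 hε0 hc hK h
    apply mul_le_mul_of_nonneg_left _ hK.le
    linarith
  rcases le_or_gt (1 / 2) ε with hε | hε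
  · left
    rw [← one_mul (poch β (m + 1) * poch ε (m + 1))]
    induction m with
    | zero => exact h0
    | succ m ih =>
      apply mono 1 one_pos m _ ih
      rw [hpoly a δ β ε c _ hcc]
      exact h_big _ β ε c _ hβ0 hε0 hc hβ hA (by have : (0 : ℝ) ≤ m := by positivity
                                                 linarith) hε
  · have hc6 := core_ineqs a δ β ε c hβ0 hε0 ha hd hβ hε hδ hcc hA
    have h3 : ∀ j : ℕ, 2 ≤ j →
      0 ≤ (c + ((j : ℝ) + 1)) * (((j : ℝ) + 1) + β) * (((j : ℝ) + 1) + ε)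
        - (a + ((j : ℝ) + 1)) * (δ + ((j : ℝ) + 1)) * (((j : ℝ) + 1) + β - 1 / 2) := by
      intro j hj
      rw [hpoly a δ β ε c _ hcc]
      have : (2 : ℝ) ≤ j := by exact_mod_cast hj
      exact h_three _ β ε c _ hβ0 hε0 hc hc6 hβ hA (by linarith) hε
    rcases lt_or_ge (a * δ) (2 / 3 * c) with hA' | hA'
    · left
      rw [← one_mul (poch β (m + 1) * poch ε (m + 1))]
      induction m with
      | zero => exact h0
      | succ m ih =>
        apply mono 1 one_pos m _ ih
        rcases Nat.lt_or_ge m 2 with hm | hm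
        · rw [hpoly a δ β ε c _ hcc]
          interval_cases m
          · have := h_one' _ β ε c hβ0 hε0 hc hc6 hβ hA' hε
            norm_num at this ⊢
            linarith
          · have := h_two' _ β ε c hβ0 hε0 hc hc6 hβ hA' hε
            norm_num at this ⊢
            linarith
        · exact h3 m hm
    · right
      refine ⟨hε, hA', ?_⟩
      have k1 : lastT a δ β c (0 + 1) ≤ 6 / 5 * (poch β (0 + 1 + 1) * poch ε (0 + 1 + 1)) := by
        apply lastT_step a δ β ε c 1 (6 / 5) 0 ha hd hβ0 hε0 hc one_pos h0
        have := h_one _ β ε c hβ0 hε0 hc hc6 hβ hA hε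
        rw [← hpoly a δ β ε c 1 hcc] at this
        norm_num at this ⊢
        linarith
      have k2 : lastT a δ β c (1 + 1) ≤ 33 / 25 * (poch β (1 + 1 + 1) * poch ε (1 + 1 + 1)) := by
        apply lastT_step a δ β ε c (6 / 5) (33 / 25) 1 ha hd hβ0 hε0 hc (by norm_num) k1
        have := h_two _ β ε c hβ0 hε0 hc hc6 hβ hA hε
        rw [← hpoly a δ β ε c 2 hcc] at this
        norm_num at this ⊢
        linarith
      have hP : ∀ k, 0 < poch β k * poch ε k := fun k =>
        mul_pos (poch_pos hβ0 _) (poch_pos hε0 _)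
      rcases Nat.lt_or_ge m 2 with hm | hm
      · interval_cases m
        · linarith [hP (0 + 1)]
        · linarith [hP (0 + 1 + 1)]
      · induction m, hm using Nat.le_induction with
        | base => exact k2
        | succ m hm ih => exact mono _ (by norm_num) m (h3 m hm) ih

/-- the terms of the transformed series -/
noncomputable def tterm (a δ β ε c : ℝ) (n j : ℕ) : ℝ :=
  (n.choose j) * (poch a j * poch δ j / poch c j) * poch (β - 1 / 2 + ((n - j : ℕ) : ℝ)) j *
    (poch β (n - j) * poch ε (n - j))

lemma tterm_pos (a δ β ε c : ℝ) (ha : 0 < a) (hd : 0 < δ) (hβ0 : 0 < β)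
    (hε0 : 0 < ε) (hc : 0 < c) (n j : ℕ) (hj : j < n) : 0 < tterm a δ β ε c n j := by
  unfold tterm
  have h1 : (1 : ℝ) ≤ ((n - j : ℕ) : ℝ) := by
    have : 1 ≤ n - j := by omega
    exact_mod_cast this
  have p1 := poch_pos ha j
  have p2 := poch_pos hd j
  have p3 := poch_pos hc j
  have p4 := poch_pos (a := β - 1 / 2 + ((n - j : ℕ) : ℝ)) (by linarith) j
  have p5 := poch_pos hβ0 (n - j)
  have p6 := poch_pos hε0 (n - j)
  have p7 : (0 : ℝ) < n.choose j := by exact_mod_cast Nat.choose_pos hj.le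
  positivity

lemma tterm_last (a δ β ε c : ℝ) (m : ℕ) :
    tterm a δ β ε c (m + 1) (m + 1) = - lastT a δ β c m := by
  unfold tterm lastT
  rw [Nat.sub_self, Nat.choose_self, poch_zero, poch_zero, poch_succ' (β - 1 / 2 + ((0 : ℕ) : ℝ)) m]
  have e : β - 1 / 2 + ((0 : ℕ) : ℝ) + 1 = β + 1 / 2 := by push_cast; ring
  rw [e]
  push_cast
  ring

lemma core_pos (a δ β ε c : ℝ) (ha : 0 < a) (hd : 0 < δ) (hβ0 : 0 < β)
    (hε0 : 0 < ε) (hc : 0 < c)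
    (hδ : δ = ε + a - β) (hcc : c = a + δ + ε + 1 / 2)
    (hT : a * δ * (1 / 2 - β) ≤ c * β * ε) (n : ℕ) (hn : 2 ≤ n) :
    0 < ∑ j ∈ Finset.range (n + 1), tterm a δ β ε c n j := by
  have hpos := tterm_pos a δ β ε c ha hd hβ0 hε0 hc
  rw [Finset.sum_range_succ]
  obtain ⟨m, rfl⟩ : ∃ m, n = m + 1 + 1 := ⟨n - 2, by omega⟩
  rw [tterm_last]
  rcases le_or_gt (1 / 2) β with hβ | hβ
  · have h1 : lastT a δ β c (m + 1) ≤ 0 := by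
      unfold lastT
      have p1 := poch_pos ha (m + 1 + 1)
      have p2 := poch_pos hd (m + 1 + 1)
      have p3 := poch_pos hc (m + 1 + 1)
      have p4 := poch_pos (a := β + 1 / 2) (by linarith) (m + 1)
      apply mul_nonpos_of_nonneg_of_nonpos (by positivity)
      apply mul_nonpos_of_nonpos_of_nonneg (by linarith) p4.le
    have h2 : 0 < ∑ j ∈ Finset.range (m + 1 + 1), tterm a δ β ε c (m + 1 + 1) j := by
      apply Finset.sum_pos
      · intro j hj
        exact hpos _ _ (Finset.mem_range.1 hj)
      · exact ⟨0, by simp⟩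
    linarith
  rcases le_or_gt c (a * δ) with hA | hA
  · -- compare with the term before the last
    rw [Finset.sum_range_succ]
    have h2 : 0 < ∑ j ∈ Finset.range (m + 1), tterm a δ β ε c (m + 1 + 1) j := by
      apply Finset.sum_pos
      · intro j hj
        have := Finset.mem_range.1 hj
        exact hpos _ _ (by omega)
      · exact ⟨0, by simp⟩
    have h3 : lastT a δ β c (m + 1) ≤ tterm a δ β ε c (m + 1 + 1) (m + 1) := by
      unfold lastT tterm
      have s1 : m + 1 + 1 - (m + 1) = 1 := by omega
      have s2 : (m + 1 + 1).choose (m + 1) = m + 1 + 1 := by simp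
      have e : β - 1 / 2 + ((1 : ℕ) : ℝ) = β + 1 / 2 := by push_cast; ring
      have e1 : ∀ x : ℝ, poch x 1 = x := by intro x; simp [poch]
      rw [s1, s2, e, e1, e1, poch_succ a (m + 1), poch_succ δ (m + 1), poch_succ c (m + 1)]
      have p1 := poch_pos ha (m + 1)
      have p2 := poch_pos hd (m + 1)
      have p3 := poch_pos hc (m + 1)
      have p4 := poch_pos (a := β + 1 / 2) (by linarith) (m + 1)
      push_cast
      set M : ℝ := (m : ℝ) + 1 with hM
      have hM1 : 1 ≤ M := by rw [hM]; have : (0 : ℝ) ≤ m := by positivity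
                             linarith
      have hcM : 0 < c + M := by linarith
      have f1 : c * ((a + M) * (δ + M)) ≤ a * δ * ((M + 1) * (c + M)) := by
        -- difference equals M * ( M * (A - c) + A * c + A - c * (a + δ) )
        have q : a * δ * ((M + 1) * (c + M)) - c * ((a + M) * (δ + M)) =
          M * ((M - 1) * (a * δ - c) + (c * (a * δ - a - δ - 1) + 2 * (a * δ))) := by ring
        have q1 : 0 ≤ (M - 1) * (a * δ - c) := mul_nonneg (by linarith) (by linarith)
        have q2 : 0 ≤ c * (a * δ - a - δ - 1 + 1 / 2) := mul_nonneg hc.le (by linarith)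
        have q3 : 0 ≤ M * ((M - 1) * (a * δ - c) + (c * (a * δ - a - δ - 1) + 2 * (a * δ))) := by
          apply mul_nonneg (by linarith)
          linarith
        linarith
      have f2 : (a + M) * (δ + M) * (1 / 2 - β) ≤ (M + 1) * (c + M) * (β * ε) := by
        have g1 := mul_le_mul_of_nonneg_right f1 (show 0 ≤ 1 / 2 - β by linarith)
        have g2 := mul_le_mul_of_nonneg_left hT (show 0 ≤ (M + 1) * (c + M) by positivity)
        have g3 : c * ((a + M) * (δ + M) * (1 / 2 - β)) ≤ c * ((M + 1) * (c + M) * (β * ε)) := by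
          linarith
        exact le_of_mul_le_mul_left g3 hc
      have f3 : (a + M) * (δ + M) * (1 / 2 - β) / (c + M) ≤ (M + 1) * (β * ε) := by
        rw [div_le_iff₀ hcM]; linarith
      have f4 := mul_le_mul_of_nonneg_left f3
        (show 0 ≤ poch a (m + 1) * poch δ (m + 1) / poch c (m + 1) * poch (β + 1 / 2) (m + 1) by
          positivity)
      generalize poch a (m + 1) = X at *
      generalize poch δ (m + 1) = Y at *
      generalize poch c (m + 1) = C at *
      generalize poch (β + 1 / 2) (m + 1) = Z at *
      calc X * (a + M) * (Y * (δ + M)) / (C * (c + M)) * ((1 / 2 - β) * Z)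
          = X * Y / C * Z * ((a + M) * (δ + M) * (1 / 2 - β) / (c + M)) := by
            field_simp
        _ ≤ _ := f4
        _ = _ := by ring
    linarith
  · have h2 : tterm a δ β ε c (m + 1 + 1) 0 + tterm a δ β ε c (m + 1 + 1) 1 ≤
        ∑ j ∈ Finset.range (m + 1 + 1), tterm a δ β ε c (m + 1 + 1) j := by
      have : ∑ j ∈ Finset.range 2, tterm a δ β ε c (m + 1 + 1) j ≤
        ∑ j ∈ Finset.range (m + 1 + 1), tterm a δ β ε c (m + 1 + 1) j := by
        apply Finset.sum_le_sum_of_subset_of_nonneg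
        · intro j; simp only [Finset.mem_range]; omega
        · intro j hj _
          exact (hpos _ _ (Finset.mem_range.1 hj)).le
      simpa [Finset.sum_range_succ] using this
    have h0 : tterm a δ β ε c (m + 1 + 1) 0 = poch β (m + 1 + 1) * poch ε (m + 1 + 1) := by
      simp [tterm, poch_zero]
    have h1 := hpos (m + 1 + 1) 1 (by omega)
    have hP : 0 < poch β (m + 1 + 1) * poch ε (m + 1 + 1) :=
        mul_pos (poch_pos hβ0 _) (poch_pos hε0 _)
    rcases lastT_bound a δ β ε c ha hd hβ0 hε0 hc hβ hδ hcc hA hT (m + 1) with h | ⟨hε, hA', h⟩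
    · linarith
    · have h4 : 4 / 9 * (poch β (m + 1 + 1) * poch ε (m + 1 + 1)) ≤
          tterm a δ β ε c (m + 1 + 1) 1 := by
        unfold tterm
        have s1 : m + 1 + 1 - 1 = m + 1 := by omega
        have e1 : ∀ x : ℝ, poch x 1 = x := by intro x; simp [poch]
        rw [s1, Nat.choose_one_right, e1, e1, e1, e1, poch_succ β (m + 1), poch_succ ε (m + 1)]
        have p5 := poch_pos hβ0 (m + 1)
        have p6 := poch_pos hε0 (m + 1)
        push_cast
        have hm : (0 : ℝ) ≤ m := by positivity
        set M : ℝ := (m : ℝ) + 1 with hM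
        have hM1 : 1 ≤ M := by linarith
        have f1 : 2 / 3 ≤ a * δ / c := by rw [le_div_iff₀ hc]; exact hA'
        have f2 : 2 / 3 * ((β + M) * (ε + M)) ≤ (M + 1) * (β - 1 / 2 + M) := by
          nlinarith [mul_nonneg (show 0 ≤ β + M by linarith) (show 0 ≤ 1 / 2 - ε by linarith)]
        have f3 : 0 ≤ (M + 1) * (β - 1 / 2 + M) := mul_nonneg (by linarith) (by linarith)
        have f4 : 4 / 9 * ((β + M) * (ε + M)) ≤ a * δ / c * ((M + 1) * (β - 1 / 2 + M)) := by
          have := mul_le_mul_of_nonneg_right f1 f3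
          linarith
        have f5 := mul_le_mul_of_nonneg_left f4 (mul_pos p5 p6).le
        linarith
      linarith

theorem stmt5 (a b c : ℝ) (ha : 0 < a) (hb : 0 < b) (hc : 0 < c)
    (h1 : b - a + 1 / 2 < c) (h2 : a - 1 / 2 ≤ b)
    (h3 : 3 * a + 1 / 2 - b < c) (h4 : a < b)
    (h5 : a + a / (2 * (b - a)) ≤ c) :
    0 ≤ gasperC a b c ((b + c - a - 3 / 2) / 2) 1 ∧
      ∀ n : ℕ, 2 ≤ n → 0 < gasperC a b c ((b + c - a - 3 / 2) / 2) n := by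
  have hba : 0 < b - a := by linarith
  have h5' : a / 2 ≤ (b - a) * (c - a) := by
    have : a / (2 * (b - a)) ≤ c - a := by linarith
    rw [div_le_iff₀ (by linarith)] at this
    linarith
  constructor
  · have hν : 0 < b + c - a - 1 / 2 := by linarith
    have e : gasperC a b c ((b + c - a - 3 / 2) / 2) 1 =
        1 - a * (b + c - a + 1 / 2) / (b * c) := by
      unfold gasperC
      simp only [Finset.sum_range_succ, Finset.sum_range_zero, poch_succ, poch_zero]
      have : (b + c - a - 3 / 2) / 2 + 1 / 2 ≠ 0 := by
        intro h; linarith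
      have e2 : ((1 : ℕ) : ℝ) + 2 * ((b + c - a - 3 / 2) / 2) =
        2 * ((b + c - a - 3 / 2) / 2 + 1 / 2) := by push_cast; ring
      have e3 : (b + c - a - 3 / 2) / 2 + 1 = (b + c - a + 1 / 2) / 2 := by ring
      rw [e2, e3]
      generalize (b + c - a - 3 / 2) / 2 + 1 / 2 = w at *
      simp
      field_simp
      ring
    rw [e, sub_nonneg, div_le_one (by positivity)]
    linarith
  · intro n hn
    set ν := (b + c - a - 3 / 2) / 2 with hν
    have hμ : 0 < ν + 1 / 2 := by rw [hν]; linarith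
    have w := whip n a (ν + 1) (n + 2 * ν) c b (ν + 1 / 2) hc hb hμ (by rw [hν]; ring)
    have hp : 0 < poch b n * poch (ν + 1 / 2) n := mul_pos (poch_pos hb n) (poch_pos hμ n)
    have hd : 0 < c - (ν + 1) := by rw [hν]; linarith
    have hε : 0 < ν + 1 / 2 - a := by rw [hν]; linarith
    have core := core_pos a (c - (ν + 1)) (b - a) (ν + 1 / 2 - a) c ha hd hba hε hc
      (by rw [hν]; ring) (by rw [hν]; ring)
      (by
        have hid : c * (b - a) * (ν + 1 / 2 - a) - a * (c - (ν + 1)) * (1 / 2 - (b - a))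
          = (ν + 1 / 2) * ((b - a) * (c - a) - a / 2) := by rw [hν]; ring
        have := mul_nonneg hμ.le (sub_nonneg.2 h5')
        linarith) n hn
    have hsum : ∑ j ∈ Finset.range (n + 1), tterm a (c - (ν + 1)) (b - a) (ν + 1 / 2 - a) c n j =
        poch b n * poch (ν + 1 / 2) n * gasperC a b c ν n := by
      unfold gasperC
      rw [w]
      apply Finset.sum_congr rfl
      intro j hj
      rw [Finset.mem_range] at hj
      unfold tterm
      have r := poch_reflect (b - a - 1 / 2 + ((n - j : ℕ) : ℝ)) j
      have e : 1 - (b - a - 1 / 2 + ((n - j : ℕ) : ℝ)) - j = c - (n + 2 * ν) := by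
        rw [Nat.cast_sub (by omega), hν]; ring
      rw [e] at r
      rw [r]
      have hsq : ((-1 : ℝ) ^ j) * (-1) ^ j = 1 := by rw [← mul_pow]; simp
      generalize (-1 : ℝ) ^ j = σ at *
      linear_combination (-(n.choose j * (poch a j * poch (c - (ν + 1)) j / poch c j) *
        poch (b - a - 1 / 2 + ((n - j : ℕ) : ℝ)) j *
        (poch (b - a) (n - j) * poch (ν + 1 / 2 - a) (n - j)))) * hsq
    rw [hsum] at core
    exact (pos_iff_pos_of_mul_pos core).1 hp
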